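/- Let R be a quantum solvable algebra over C = K[q,q⁻¹] (or a localization thereof): R is generated by x₁,…,x_M (with some generators invertible) such that the ordered monomials form a free C-basis, and x_i x_j = q^{s_{ij}} x_j x_i + r_{ij} for i < j, where r_{ij} is a C-combination of monomials in x_{i+1},…,x_{j−1} only, and (s_{ij}) is skew-symmetric. Then every FA-element of R is an FA_q-element: for every a ∈ R the polynomial f_a(t) in the FA-relation can be chosen to split into linear factors with all roots in Γ = {qᵏ : k ∈ ℤ}. -/

import Mathlib

/-- The ordered monomial `x₁^{t₁} ⋯ x_M^{t_M}` (negative exponents realized via the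
given inverses of the distinguished generators). -/
def orderedMonomial {R : Type*} [Ring R] {M : ℕ} (x xinv : Fin M → R)
    (t : Fin M → ℤ) : R :=
  ((List.finRange M).map fun j =>
    if 0 ≤ t j then x j ^ (t j).toNat else xinv j ^ (- t j).toNat).prod

/-- `x` is an FA-element of the domain `R` over the field `F`. -/
def IsFA (F : Type*) {R : Type*} [Field F] [Ring R] [Algebra F R] (x : R) : Prop :=
  x ≠ 0 ∧ ∀ a : R, ∃ (N : ℕ) (c : ℕ → F), c 0 ≠ 0 ∧ c N ≠ 0 ∧
    ∑ i ∈ Finset.range (N + 1), c i • (x ^ (N - i) * a * x ^ i) = 0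

/-! The idea: order the monomials lexicographically. The relations make the associated graded
algebra a twisted polynomial algebra, so elements `y`, `a` with leading exponents `m`, `n` satisfy
`y * a = q ^ k • (a * y)` up to terms of exponent less than `m + n`. In an FA-relation of `a`, the
terms of exponent `n + N • m` then add up to a nonzero multiple of the value at `q ^ k` of its
polynomial, so `q ^ k` is a root. Splitting off the factor `X - q ^ k` replaces `a` by
`y * a - q ^ k • (a * y)` and lowers the degree by one, so induction on the degree applies. -/

open Polynomial Set Submodule

section SandwichSum

variable {F R : Type*} [Field F] [Ring R] [Algebra F R]

/-- The degree-`N` homogenization of `p`, evaluated at left and right multiplication by `y` and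
applied to `a`. It involves only the coefficients of `p` up to degree `N`. -/
def sandwichSum (p : F[X]) (N : ℕ) (y a : R) : R :=
  ∑ i ∈ Finset.range (N + 1), p.coeff i • (y ^ i * a * y ^ (N - i))

/-- `x` is an FA_q-element: the polynomial of every FA-relation can be chosen as a product of
linear factors with roots in `Γ = {q ^ k : k ∈ ℤ}`. -/
def IsFAq (q : F) (x : R) : Prop :=
  x ≠ 0 ∧ ∀ a : R, ∃ (N : ℕ) (e : Fin N → ℤ) (c₀ : F), c₀ ≠ 0 ∧
    sandwichSum (c₀ • ∏ w : Fin N, (X - C (q ^ e w))) N x a = 0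

theorem sandwichSum_add (p p' : F[X]) (N : ℕ) (y a : R) :
    sandwichSum (p + p') N y a = sandwichSum p N y a + sandwichSum p' N y a := by
  simp only [sandwichSum, coeff_add, add_smul, Finset.sum_add_distrib]

theorem sandwichSum_C (c : F) (N : ℕ) (y a : R) : sandwichSum (C c) N y a = c • (a * y ^ N) := by
  simp [sandwichSum, Finset.sum_range_succ', coeff_C_succ]

@[simp]
theorem sandwichSum_zero_right (p : F[X]) (N : ℕ) (y : R) : sandwichSum p N y 0 = 0 := by
  simp [sandwichSum]

theorem sandwichSum_mem {V : Submodule F R} {y a : R} {N : ℕ}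
    (hV : ∀ i j, i + j = N → y ^ i * a * y ^ j ∈ V) (p : F[X]) : sandwichSum p N y a ∈ V :=
  sum_mem fun i hi => V.smul_mem _ <|
    hV i _ (Nat.add_sub_of_le (Nat.lt_succ_iff.mp (Finset.mem_range.mp hi)))

theorem sandwichSum_X_sub_C_mul {g : F[X]} {N : ℕ} (hg : g.natDegree ≤ N) (α : F) (y a : R) :
    sandwichSum ((X - C α) * g) (N + 1) y a = sandwichSum g N y (y * a - α • (a * y)) := by
  have coeff_top : g.coeff (N + 1) = 0 := coeff_eq_zero_of_natDegree_lt (Nat.lt_succ_of_le hg)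
  simp only [sandwichSum, sub_mul, coeff_sub, coeff_C_mul, sub_smul, Finset.sum_sub_distrib]
  rw [Finset.sum_range_succ', Finset.sum_range_succ (fun i => (α * g.coeff i) • _)]
  simp only [coeff_X_mul, coeff_X_mul_zero, zero_smul, coeff_top, mul_zero, add_zero]
  rw [← Finset.sum_sub_distrib]
  refine Finset.sum_congr rfl fun i hi => ?_
  rw [Nat.add_sub_add_right, Nat.succ_sub (Nat.lt_succ_iff.mp (Finset.mem_range.mp hi)),
    pow_succ y i, pow_succ' y (N - i)]
  simp only [mul_sub, sub_mul, smul_sub, mul_smul_comm, smul_mul_assoc, smul_smul, mul_assoc,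
    mul_comm α]

theorem IsFA.exists_sandwichSum_eq_zero {x : R} (hx : IsFA F x) (a : R) :
    ∃ (N : ℕ) (p : F[X]), p ≠ 0 ∧ p.natDegree ≤ N ∧ sandwichSum p N x a = 0 := by
  classical
  obtain ⟨N, c, hc, -, hrel⟩ := hx.2 a
  let p : F[X] := ofFn (N + 1) fun i => c (N - i)
  have coeff_p {i : ℕ} (hi : i < N + 1) : p.coeff i = c (N - i) :=
    ofFn_coeff_eq_val_of_lt _ hi
  have p_ne_zero : p ≠ 0 := fun hp => hc <| by
    simpa [hp] using (coeff_p N.lt_succ_self).symm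
  refine ⟨N, p, p_ne_zero, Nat.lt_succ_iff.mp (ofFn_natDegree_lt (by omega) _), ?_⟩
  rw [← hrel, ← Finset.sum_range_reflect]
  refine Finset.sum_congr rfl fun i hi => ?_
  have hi : i < N + 1 := Finset.mem_range.mp hi
  rw [coeff_p hi, Nat.add_sub_cancel, Nat.sub_sub_self (Nat.lt_succ_iff.mp hi)]

theorem exists_prod_sandwichSum_eq_zero {q : F} {y : R}
    (hroot : ∀ a : R, a ≠ 0 → ∃ k : ℤ, ∀ (N : ℕ) (p : F[X]), p.natDegree ≤ N + 1 →
      sandwichSum p (N + 1) y a = 0 → p.IsRoot (q ^ k))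
    (N : ℕ) {p : F[X]} {a : R} (hp : p ≠ 0) (hdeg : p.natDegree ≤ N)
    (hrel : sandwichSum p N y a = 0) :
    ∃ (L : ℕ) (e : Fin L → ℤ), sandwichSum (∏ w, (X - C (q ^ e w))) L y a = 0 := by
  induction N generalizing p a with
  | zero =>
    obtain ⟨c, rfl⟩ := natDegree_eq_zero.mp (Nat.le_zero.mp hdeg)
    have a_eq_zero : a = 0 := by simpa [sandwichSum_C, C_ne_zero.mp hp] using hrel
    exact ⟨0, Fin.elim0, by rw [a_eq_zero, sandwichSum_zero_right]⟩
  | succ N ih =>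
    rcases eq_or_ne a 0 with rfl | ha
    · exact ⟨0, Fin.elim0, sandwichSum_zero_right ..⟩
    obtain ⟨k, hk⟩ := hroot a ha
    obtain ⟨g, rfl⟩ := dvd_iff_isRoot.mpr (hk N p hdeg hrel)
    have g_ne_zero : g ≠ 0 := right_ne_zero_of_mul hp
    have g_deg : g.natDegree ≤ N := by
      rw [natDegree_mul (X_sub_C_ne_zero _) g_ne_zero, natDegree_X_sub_C] at hdeg
      omega
    rw [sandwichSum_X_sub_C_mul g_deg] at hrel
    obtain ⟨L, e, he⟩ := ih g_ne_zero g_deg hrel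
    refine ⟨L + 1, Fin.cons k e, ?_⟩
    simp only [Fin.prod_univ_succ, Fin.cons_zero, Fin.cons_succ]
    rwa [sandwichSum_X_sub_C_mul ((natDegree_finsetProd_X_sub_C_eq_card _ _).trans_le (by simp))]

end SandwichSum

section QCommuteMod

variable {F R : Type*} [Field F] [Ring R] [Algebra F R] {q : F} {A B : Submodule F R} {a c d : R}

/-- `a` and `c` commute up to a power of `q` and an error term in `B`. -/
def QCommuteMod (q : F) (B : Submodule F R) (a c : R) : Prop :=
  ∃ k : ℤ, a * c - q ^ k • (c * a) ∈ B

namespace QCommuteMod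

theorem mono (hAB : A ≤ B) (h : QCommuteMod q A a c) : QCommuteMod q B a c :=
  h.imp fun _ hk => hAB hk

theorem one_left (q : F) (B : Submodule F R) (c : R) : QCommuteMod q B 1 c :=
  ⟨0, by simp⟩

theorem symm (hq : q ≠ 0) (h : QCommuteMod q B a c) : QCommuteMod q B c a := by
  obtain ⟨k, hk⟩ := h
  refine ⟨-k, ?_⟩
  have swap : c * a - q ^ (-k) • (a * c) = -(q ^ (-k) • (a * c - q ^ k • (c * a))) := by
    rw [smul_sub, smul_smul, ← zpow_add₀ hq, neg_add_cancel, zpow_zero, one_smul, neg_sub]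
  exact swap ▸ B.neg_mem (B.smul_mem _ hk)

theorem mul_left (hq : q ≠ 0) (ha : QCommuteMod q B a d) (hc : QCommuteMod q B c d)
    (hleft : ∀ y ∈ B, a * y ∈ B) (hright : ∀ y ∈ B, y * c ∈ B) : QCommuteMod q B (a * c) d := by
  obtain ⟨k, hk⟩ := ha
  obtain ⟨l, hl⟩ := hc
  refine ⟨k + l, ?_⟩
  have leibniz : a * c * d - q ^ (k + l) • (d * (a * c)) =
      a * (c * d - q ^ l • (d * c)) + q ^ l • ((a * d - q ^ k • (d * a)) * c) := by
    simp only [add_comm k, zpow_add₀ hq, mul_sub, sub_mul, smul_sub, mul_smul_comm,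
      smul_mul_assoc, smul_smul, mul_assoc]
    abel
  exact leibniz ▸ add_mem (hleft _ hl) (B.smul_mem _ (hright _ hk))

theorem inv_left (hq : q ≠ 0) (h : QCommuteMod q B a c) (hdr : a * d = 1) (hdl : d * a = 1)
    (hB : ∀ y ∈ B, d * y * d ∈ B) : QCommuteMod q B d c := by
  obtain ⟨k, hk⟩ := h.symm hq
  refine ⟨k, ?_⟩
  have conj : d * (c * a - q ^ k • (a * c)) * d = d * c - q ^ k • (c * d) := by
    rw [mul_sub, sub_mul, mul_smul_comm, smul_mul_assoc, ← mul_assoc d a, hdl, one_mul,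
      mul_assoc, mul_assoc, hdr, mul_one]
  exact conj ▸ hB _ hk

theorem of_mem_closure (hq : q ≠ 0) {G : Set R} (hG : ∀ g ∈ G, QCommuteMod q B g c)
    (hleft : ∀ a ∈ Algebra.adjoin F G, ∀ y ∈ B, a * y ∈ B)
    (hright : ∀ a ∈ Algebra.adjoin F G, ∀ y ∈ B, y * a ∈ B)
    (ha : a ∈ Submonoid.closure G) : QCommuteMod q B a c := by
  have closure_le : Submonoid.closure G ≤ (Algebra.adjoin F G).toSubmonoid :=
    Submonoid.closure_le.mpr Algebra.subset_adjoin
  induction ha using Submonoid.closure_induction with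
  | mem g hg => exact hG g hg
  | one => exact one_left q B c
  | mul a b ha hb iha ihb =>
    exact iha.mul_left hq ihb (hleft a (closure_le ha)) (hright b (closure_le hb))

theorem pow_right (hq : q ≠ 0) {D : ℕ → Submodule F R} (h : QCommuteMod q B a c)
    (hD : ∀ n, ∀ y ∈ D n, y * c ∈ D (n + 1)) (hB : ∀ n, ∀ y ∈ B, c ^ n * y ∈ D (n + 1)) (n : ℕ) :
    QCommuteMod q (D n) a (c ^ n) := by
  obtain ⟨k, hk⟩ := h
  induction n with
  | zero => exact ⟨0, by simp⟩
  | succ n ih =>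
    obtain ⟨l, hl⟩ := ih
    refine ⟨l + k, ?_⟩
    have leibniz : a * c ^ (n + 1) - q ^ (l + k) • (c ^ (n + 1) * a) =
        (a * c ^ n - q ^ l • (c ^ n * a)) * c + q ^ l • (c ^ n * (a * c - q ^ k • (c * a))) := by
      simp only [zpow_add₀ hq, pow_succ, mul_sub, sub_mul, smul_sub, mul_smul_comm,
        smul_mul_assoc, smul_smul, mul_assoc]
      abel
    exact leibniz ▸ add_mem (hD n _ hl) ((D (n + 1)).smul_mem _ (hB n _ hk))

end QCommuteMod

end QCommuteMod

section LeadingTerm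

variable {Γ F R : Type*} [AddCommMonoid Γ] [LinearOrder Γ] [Field F] [Ring R]
  [Algebra F R] {q : F} {b : Γ → R} {S : AddSubmonoid Γ} {m n : Γ} {c d : F} {y z : R}

variable (F) in
/-- The part of degree less than `m` in the filtration given by the family `b` on `S`. -/
def spanLT (b : Γ → R) (S : AddSubmonoid Γ) (m : Γ) : Submodule F R :=
  span F (b '' (S ∩ Iio m))

variable (F) in
/-- The part of degree at most `m` in the filtration given by the family `b` on `S`. -/
def spanLE (b : Γ → R) (S : AddSubmonoid Γ) (m : Γ) : Submodule F R :=
  span F (b '' (S ∩ Iic m))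

/-- The family `b` multiplies like monomials in `q`-commuting variables, up to terms of lower
degree: the associated graded algebra of the filtration it spans is a twisted monoid algebra. -/
structure IsTwistedFiltered (q : F) (b : Γ → R) (S : AddSubmonoid Γ) : Prop where
  map_zero : b 0 = 1
  map_mul : ∀ m ∈ S, ∀ n ∈ S, ∃ k : ℤ, b m * b n - q ^ k • b (m + n) ∈ spanLT F b S (m + n)

/-- `y` has leading term `c • b m`. -/
structure HasLeadingTerm (b : Γ → R) (S : AddSubmonoid Γ) (y : R) (m : Γ) (c : F) : Prop where
  mem : m ∈ S
  coeff_ne_zero : c ≠ 0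
  sub_smul_mem : y - c • b m ∈ spanLT F b S m

theorem spanLT_le_spanLE (b : Γ → R) (S : AddSubmonoid Γ) (m : Γ) :
    spanLT F b S m ≤ spanLE F b S m :=
  span_mono (image_mono (inter_subset_inter_right _ Iio_subset_Iic_self))

theorem apply_mem_spanLE (hm : m ∈ S) : b m ∈ spanLE F b S m :=
  subset_span (mem_image_of_mem b ⟨hm, self_mem_Iic⟩)

namespace IsTwistedFiltered

theorem span_mul_span_le (hb : IsTwistedFiltered q b S) {T U D : Set Γ} (hD : IsLowerSet D)
    (hTU : ∀ m ∈ T, ∀ n ∈ U, m + n ∈ D) :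
    span F (b '' (S ∩ T)) * span F (b '' (S ∩ U)) ≤ span F (b '' (S ∩ D)) := by
  rw [span_mul_span, span_le]
  rintro _ ⟨_, ⟨m, ⟨hmS, hmT⟩, rfl⟩, _, ⟨n, ⟨hnS, hnU⟩, rfl⟩, rfl⟩
  obtain ⟨k, hk⟩ := hb.map_mul m hmS n hnS
  have lower : b m * b n - q ^ k • b (m + n) ∈ span F (b '' (S ∩ D)) :=
    span_mono (image_mono (inter_subset_inter_right _
      fun _ hu => hD (le_of_lt hu) (hTU m hmT n hnU))) hk
  have top : b (m + n) ∈ span F (b '' (S ∩ D)) :=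
    subset_span (mem_image_of_mem b ⟨S.add_mem hmS hnS, hTU m hmT n hnU⟩)
  exact (sub_mem_iff_left _ (smul_mem _ _ top)).mp lower

/-- The span of the whole family, which is closed under multiplication. -/
def spanSubalgebra (hb : IsTwistedFiltered q b S) : Subalgebra F R :=
  (span F (b '' S)).toSubalgebra
    (hb.map_zero ▸ subset_span (mem_image_of_mem b S.zero_mem))
    fun y z hy hz => by
      simpa using hb.span_mul_span_le isLowerSet_univ (T := univ) (U := univ)
        (fun _ _ _ _ => mem_univ _) (mul_mem_mul (by simpa using hy) (by simpa using hz))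

end IsTwistedFiltered

namespace HasLeadingTerm

theorem mem_spanLE (hy : HasLeadingTerm b S y m c) : y ∈ spanLE F b S m :=
  (sub_mem_iff_left _ (smul_mem _ c (apply_mem_spanLE hy.mem))).mp
    (spanLT_le_spanLE b S m hy.sub_smul_mem)

theorem notMem_spanLT (hind : LinearIndepOn F b S) (hy : HasLeadingTerm b S y m c) :
    y ∉ spanLT F b S m := by
  intro hlt
  have hbm : b m ∈ spanLT F b S m :=
    (smul_mem_iff _ hy.coeff_ne_zero).mp ((sub_mem_iff_right _ hlt).mp hy.sub_smul_mem)
  have hsub : insert m ((S : Set Γ) ∩ Iio m) ⊆ S := insert_subset hy.mem inter_subset_left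
  exact ((hind.mono inter_subset_left).notMem_span_iff.mpr
    ⟨hind.mono hsub, fun h => lt_irrefl m h.2⟩) hbm

theorem exists_of_mem_span (hy : y ∈ span F (b '' S)) (hne : y ≠ 0) :
    ∃ (m : Γ) (c : F), HasLeadingTerm b S y m c := by
  obtain ⟨l, hl, rfl⟩ := (Finsupp.mem_span_image_iff_linearCombination F).mp hy
  have support_nonempty : l.support.Nonempty :=
    Finsupp.support_nonempty_iff.mpr fun h => hne (by rw [h, map_zero])
  set m := l.support.max' support_nonempty
  have hm : m ∈ l.support := l.support.max'_mem _
  refine ⟨m, l m, hl hm, Finsupp.mem_support_iff.mp hm, ?_⟩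
  rw [Finsupp.linearCombination_apply, Finsupp.sum, ← Finset.sum_erase_add _ _ hm,
    add_sub_cancel_right]
  refine sum_mem fun u hu => smul_mem _ _ (subset_span (mem_image_of_mem b ⟨?_, ?_⟩))
  · exact hl (Finset.mem_of_mem_erase hu)
  · exact l.support.lt_max'_of_mem_erase_max' support_nonempty hu

theorem one (hb : IsTwistedFiltered q b S) : HasLeadingTerm b S (1 : R) 0 (1 : F) :=
  ⟨S.zero_mem, one_ne_zero, by simp [hb.map_zero]⟩

end HasLeadingTerm

variable [IsOrderedCancelAddMonoid Γ]

namespace IsTwistedFiltered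

theorem spanLT_mul_spanLE (hb : IsTwistedFiltered q b S) (hy : y ∈ spanLT F b S m)
    (hz : z ∈ spanLE F b S n) : y * z ∈ spanLT F b S (m + n) :=
  hb.span_mul_span_le (isLowerSet_Iio _) (fun _ hu _ hv => add_lt_add_of_lt_of_le hu hv)
    (mul_mem_mul hy hz)

theorem spanLE_mul_spanLT (hb : IsTwistedFiltered q b S) (hy : y ∈ spanLE F b S m)
    (hz : z ∈ spanLT F b S n) : y * z ∈ spanLT F b S (m + n) :=
  hb.span_mul_span_le (isLowerSet_Iio _) (fun _ hu _ hv => add_lt_add_of_le_of_lt hu hv)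
    (mul_mem_mul hy hz)

end IsTwistedFiltered

namespace HasLeadingTerm

variable (hb : IsTwistedFiltered q b S)
include hb

theorem mul (hq : q ≠ 0) (hy : HasLeadingTerm b S y m c) (hz : HasLeadingTerm b S z n d) :
    ∃ k : ℤ, HasLeadingTerm b S (y * z) (m + n) (c * d * q ^ k) := by
  obtain ⟨k, hk⟩ := hb.map_mul m hy.mem n hz.mem
  refine ⟨k, S.add_mem hy.mem hz.mem,
    mul_ne_zero (mul_ne_zero hy.coeff_ne_zero hz.coeff_ne_zero) (zpow_ne_zero k hq), ?_⟩
  have expand : y * z - (c * d * q ^ k) • b (m + n) =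
      (y - c • b m) * z + c • (b m * (z - d • b n)) +
        (c * d) • (b m * b n - q ^ k • b (m + n)) := by
    simp only [mul_sub, sub_mul, smul_sub, mul_smul_comm, smul_mul_assoc, smul_smul]
    abel
  rw [expand]
  exact add_mem (add_mem (hb.spanLT_mul_spanLE hy.sub_smul_mem hz.mem_spanLE)
    (smul_mem _ _ (hb.spanLE_mul_spanLT (apply_mem_spanLE hy.mem) hz.sub_smul_mem)))
    (smul_mem _ _ hk)

theorem pow (hq : q ≠ 0) (hy : HasLeadingTerm b S y m c) (i : ℕ) :
    ∃ d : F, HasLeadingTerm b S (y ^ i) (i • m) d := by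
  induction i with
  | zero => exact ⟨1, by simpa using one hb⟩
  | succ i ih =>
    obtain ⟨d, hd⟩ := ih
    obtain ⟨k, hk⟩ := hd.mul hb hq hy
    exact ⟨_, by rwa [pow_succ, succ_nsmul]⟩

theorem qCommuteMod (hq : q ≠ 0) (hy : HasLeadingTerm b S y m c) (hz : HasLeadingTerm b S z n d) :
    QCommuteMod q (spanLT F b S (m + n)) y z := by
  obtain ⟨k, hyz⟩ := hy.mul hb hq hz
  obtain ⟨l, hzy⟩ := hz.mul hb hq hy
  refine ⟨k - l, ?_⟩
  have cancel : q ^ (k - l) * (d * c * q ^ l) = c * d * q ^ k := by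
    rw [zpow_sub₀ hq]
    field_simp
  have combine := sub_mem hyz.sub_smul_mem
    (smul_mem _ (q ^ (k - l)) (add_comm n m ▸ hzy.sub_smul_mem))
  rwa [smul_sub, smul_smul, cancel, sub_sub_sub_cancel_right] at combine

/-- Dividing `p` by `X - q ^ k`, where `y * z - q ^ k • (z * y)` has lower degree than `y * z`,
leaves the remainder `p.eval (q ^ k)` as the leading coefficient of the relation. -/
theorem exists_isRoot (hq : q ≠ 0) (hind : LinearIndepOn F b S)
    (hy : HasLeadingTerm b S y m c) (hz : HasLeadingTerm b S z n d) :
    ∃ k : ℤ, ∀ (N : ℕ) (p : F[X]), p.natDegree ≤ N + 1 →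
      sandwichSum p (N + 1) y z = 0 → p.IsRoot (q ^ k) := by
  obtain ⟨k, hk⟩ := hy.qCommuteMod hb hq hz
  refine ⟨k, fun N p hdeg hrel => ?_⟩
  set g := p /ₘ (X - C (q ^ k))
  have g_deg : g.natDegree ≤ N := by
    rw [natDegree_divByMonic _ (monic_X_sub_C _), natDegree_X_sub_C]
    omega
  have division : (X - C (q ^ k)) * g + C (p.eval (q ^ k)) = p := by
    rw [← modByMonic_X_sub_C_eq_C_eval, add_comm, modByMonic_add_div]
  rw [← division, sandwichSum_add, sandwichSum_X_sub_C_mul g_deg, sandwichSum_C] at hrel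
  have quotient_mem : sandwichSum g N y (y * z - q ^ k • (z * y)) ∈
      spanLT F b S (n + (N + 1) • m) := by
    refine sandwichSum_mem (fun i j hij => ?_) g
    obtain ⟨_, hyi⟩ := hy.pow hb hq i
    obtain ⟨_, hyj⟩ := hy.pow hb hq j
    have degree : i • m + (m + n) + j • m = n + (N + 1) • m := by
      rw [← hij, add_smul, add_smul, one_smul]
      abel
    exact degree ▸ hb.spanLT_mul_spanLE (hb.spanLE_mul_spanLT hyi.mem_spanLE hk) hyj.mem_spanLE
  obtain ⟨_, hpow⟩ := hy.pow hb hq (N + 1)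
  obtain ⟨_, hprod⟩ := hz.mul hb hq hpow
  by_contra hne
  exact hprod.notMem_spanLT hind <| (smul_mem_iff _ hne).mp <|
    (add_mem_cancel_left quotient_mem).mp (hrel ▸ zero_mem _)

end HasLeadingTerm

theorem IsFA.isFAq_of_isTwistedFiltered (hb : IsTwistedFiltered q b S) (hq : q ≠ 0)
    (hind : LinearIndepOn F b S) (hspan : span F (b '' S) = ⊤) (hy : IsFA F y) : IsFAq q y := by
  refine ⟨hy.1, fun a => ?_⟩
  obtain ⟨N, p, hp, hdeg, hrel⟩ := hy.exists_sandwichSum_eq_zero a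
  have exists_leadingTerm {z : R} (hz : z ≠ 0) : ∃ m c, HasLeadingTerm (F := F) b S z m c :=
    HasLeadingTerm.exists_of_mem_span (hspan ▸ mem_top) hz
  obtain ⟨m, c, hlead⟩ := exists_leadingTerm hy.1
  have hroot (z : R) (hz : z ≠ 0) : ∃ k : ℤ, ∀ (N : ℕ) (p : F[X]), p.natDegree ≤ N + 1 →
      sandwichSum p (N + 1) y z = 0 → p.IsRoot (q ^ k) := by
    obtain ⟨n, d, hz⟩ := exists_leadingTerm hz
    exact hlead.exists_isRoot hb hq hind hz
  obtain ⟨L, e, he⟩ := exists_prod_sandwichSum_eq_zero hroot N hp hdeg hrel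
  exact ⟨L, e, 1, one_ne_zero, by rwa [one_smul]⟩

end LeadingTerm

section SignedPow

variable {R : Type*} [Ring R] {x y : R}

/-- The power `x ^ z`, where `y` plays the role of `x⁻¹` when `z` is negative. -/
def signedPow (x y : R) (z : ℤ) : R :=
  if 0 ≤ z then x ^ z.toNat else y ^ (-z).toNat

@[simp]
theorem signedPow_natCast (x y : R) (n : ℕ) : signedPow x y n = x ^ n := by
  simp [signedPow]

@[simp]
theorem signedPow_zero (x y : R) : signedPow x y 0 = 1 := by
  simp [signedPow]

@[simp]
theorem signedPow_one (x y : R) : signedPow x y 1 = x := by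
  simp [signedPow]

@[simp]
theorem signedPow_neg_one (x y : R) : signedPow x y (-1) = y := by
  simp [signedPow]

theorem signedPow_units (u : Rˣ) (z : ℤ) : signedPow (u : R) ↑u⁻¹ z = ↑(u ^ z) := by
  obtain ⟨n, rfl | rfl⟩ := z.eq_nat_or_neg
  · simp
  · rcases n.eq_zero_or_pos with rfl | hn
    · simp
    · rw [signedPow, if_neg (by omega), neg_neg, Int.toNat_natCast, zpow_neg, zpow_natCast,
        ← inv_pow, Units.val_pow_eq_pow_val]

theorem signedPow_add_of_nonneg {w z : ℤ} (hw : 0 ≤ w) (hz : 0 ≤ z) :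
    signedPow x y (w + z) = signedPow x y w * signedPow x y z := by
  rw [signedPow, signedPow, signedPow, if_pos hw, if_pos hz, if_pos (add_nonneg hw hz),
    Int.toNat_add hw hz, pow_add]

theorem signedPow_add_of_inverse (hxy : x * y = 1 ∧ y * x = 1) (w z : ℤ) :
    signedPow x y (w + z) = signedPow x y w * signedPow x y z := by
  let u : Rˣ := ⟨x, y, hxy.1, hxy.2⟩
  change signedPow (u : R) ↑u⁻¹ _ = signedPow (u : R) ↑u⁻¹ _ * signedPow (u : R) ↑u⁻¹ _
  simp only [signedPow_units, zpow_add, Units.val_mul]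

theorem signedPow_mem_closure {G : Set R} {z : ℤ} (hx : x ∈ G) (hy : z < 0 → y ∈ G) :
    signedPow x y z ∈ Submonoid.closure G := by
  unfold signedPow
  split_ifs with hz
  · exact pow_mem (Submonoid.subset_closure hx) _
  · exact pow_mem (Submonoid.subset_closure (hy (not_le.mp hz))) _

end SignedPow

section Monomials

variable {R : Type*} {M : ℕ} {I J : Set (Fin M)} {x xinv : Fin M → R}

/-- The generators with index in `J`, together with the inverses of those with index in `I`. -/
def generatorsOn (x xinv : Fin M → R) (I J : Set (Fin M)) : Set R :=
  x '' J ∪ xinv '' (I ∩ J)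

theorem generatorsOn_comp {M' : ℕ} (x xinv : Fin M → R) (I : Set (Fin M)) (f : Fin M' → Fin M)
    (J : Set (Fin M')) :
    generatorsOn (x ∘ f) (xinv ∘ f) (f ⁻¹' I) J = generatorsOn x xinv I (f '' J) := by
  simp only [generatorsOn, image_comp, image_preimage_inter]

theorem generatorsOn_comp_succ (x xinv : Fin (M + 1) → R) (I : Set (Fin (M + 1))) :
    generatorsOn (x ∘ Fin.succ) (xinv ∘ Fin.succ) (Fin.succ ⁻¹' I) univ =
      generatorsOn x xinv I (Ioi 0) := by
  rw [generatorsOn_comp, image_univ, Fin.range_succ, ← bot_eq_zero, Ioi_bot]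

variable [Ring R]

/-- The exponents of the ordered monomials: only generators with index in `I` may occur with
negative exponents. The lexicographic order gives the most weight to the first generator. -/
def admissibleExponents (I : Set (Fin M)) : AddSubmonoid (Lex (Fin M → ℤ)) where
  carrier := {t | ∀ j ∉ I, 0 ≤ t j}
  zero_mem' _ _ := le_rfl
  add_mem' ht hu j hj := add_nonneg (ht j hj) (hu j hj)

/-- `orderedMonomial` as a family indexed by the lexicographically ordered exponents. -/
def lexMonomial (x xinv : Fin M → R) (t : Lex (Fin M → ℤ)) : R :=
  orderedMonomial x xinv (ofLex t)

theorem orderedMonomial_eq_prod_signedPow (x xinv : Fin M → R) (t : Fin M → ℤ) :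
    orderedMonomial x xinv t =
      ((List.finRange M).map fun j => signedPow (x j) (xinv j) (t j)).prod :=
  rfl

theorem orderedMonomial_cons (x xinv : Fin (M + 1) → R) (z : ℤ) (v : Fin M → ℤ) :
    orderedMonomial x xinv (Fin.cons z v) =
      signedPow (x 0) (xinv 0) z * orderedMonomial (x ∘ Fin.succ) (xinv ∘ Fin.succ) v := by
  simp only [orderedMonomial_eq_prod_signedPow, List.finRange_succ, List.map_cons, List.prod_cons,
    List.map_map, Fin.cons_zero, Function.comp_def, Fin.cons_succ]

theorem orderedMonomial_zero (x xinv : Fin M → R) : orderedMonomial x xinv 0 = 1 := by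
  simp [orderedMonomial_eq_prod_signedPow]

theorem orderedMonomial_single (x xinv : Fin M → R) (j : Fin M) (z : ℤ) :
    orderedMonomial x xinv (Pi.single j z) = signedPow (x j) (xinv j) z := by
  induction M with
  | zero => exact j.elim0
  | succ M ih =>
    cases j using Fin.cases with
    | zero =>
      have cons : (Pi.single 0 z : Fin (M + 1) → ℤ) = Fin.cons z 0 := by
        ext k; cases k using Fin.cases <;> simp
      rw [cons, orderedMonomial_cons, orderedMonomial_zero, mul_one]
    | succ j =>
      have cons : (Pi.single j.succ z : Fin (M + 1) → ℤ) = Fin.cons 0 (Pi.single j z) := by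
        ext k; cases k using Fin.cases <;> simp [Pi.single_apply]
      rw [cons, orderedMonomial_cons, signedPow_zero, one_mul, ih, Function.comp_apply,
        Function.comp_apply]

theorem orderedMonomial_mem_closure {t : Fin M → ℤ} (ht : ∀ j ∉ I, 0 ≤ t j)
    (hJ : ∀ j, t j ≠ 0 → j ∈ J) :
    orderedMonomial x xinv t ∈ Submonoid.closure (generatorsOn x xinv I J) := by
  refine Submonoid.list_prod_mem _ (List.forall_mem_map.mpr fun j _ => ?_)
  rcases eq_or_ne (t j) 0 with hj | hj
  · simp [hj]
  · refine signedPow_mem_closure (.inl (mem_image_of_mem x (hJ j hj))) fun hneg =>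
      .inr (mem_image_of_mem xinv ⟨?_, hJ j hj⟩)
    exact by_contra fun hI => (ht j hI).not_gt hneg

theorem adjoin_generatorsOn_le {F : Type*} [Field F] [Algebra F R] {A : Subalgebra F R}
    (hA : lexMonomial x xinv '' admissibleExponents I ⊆ A) (J : Set (Fin M)) :
    Algebra.adjoin F (generatorsOn x xinv I J) ≤ A := by
  refine Algebra.adjoin_le ?_
  rintro _ (⟨j, -, rfl⟩ | ⟨j, ⟨hj, -⟩, rfl⟩)
  · refine hA ⟨toLex (Pi.single j 1), fun k _ => ?_, ?_⟩
    · exact (Pi.single_nonneg (α := fun _ : Fin M => ℤ)).mpr zero_le_one k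
    · exact (orderedMonomial_single x xinv j 1).trans (signedPow_one _ _)
  · refine hA ⟨toLex (Pi.single j (-1)), fun k hk => ?_, ?_⟩
    · exact (Pi.single_eq_of_ne (M := fun _ : Fin M => ℤ)
        (ne_of_mem_of_not_mem hj hk).symm (-1)).ge
    · exact (orderedMonomial_single x xinv j (-1)).trans (signedPow_neg_one _ _)

end Monomials

section QuantumSolvable

variable {F R : Type*} [Field F] [Ring R] [Algebra F R] {q : F} {M : ℕ} {I : Set (Fin M)}
  {x xinv : Fin M → R}

/-- The relations of a quantum solvable algebra whose generators with index in `I` are invertible.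
The error term of `x i` and `x j` may be any polynomial in the generators after `x i` and their
inverses, not only in the generators between `x i` and `x j`. -/
structure QuantumSolvableRelations (q : F) (I : Set (Fin M)) (x xinv : Fin M → R) : Prop where
  inverse : ∀ j ∈ I, x j * xinv j = 1 ∧ xinv j * x j = 1
  qCommuteMod : ∀ i j, i < j → QCommuteMod q
    (Algebra.adjoin F (generatorsOn x xinv I (Ioi i))).toSubmodule (x i) (x j)
  qCommuteMod_bot : ∀ i ∈ I, ∀ j, i < j → QCommuteMod q ⊥ (x i) (x j)

variable (F) in
/-- The combinations, with coefficients in the algebra of the generators after `x i`, of powers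
of `x i` with exponent less than `z`. -/
def powSpanLT (I : Set (Fin M)) (x xinv : Fin M → R) (i : Fin M) (z : ℤ) : Submodule F R :=
  span F {y | ∃ w < z, (i ∉ I → 0 ≤ w) ∧
    ∃ c ∈ Algebra.adjoin F (generatorsOn x xinv I (Ioi i)), signedPow (x i) (xinv i) w * c = y}

namespace QuantumSolvableRelations

theorem signedPow_add (h : QuantumSolvableRelations q I x xinv) {i : Fin M} {w z : ℤ}
    (hw : i ∉ I → 0 ≤ w) (hz : i ∉ I → 0 ≤ z) :
    signedPow (x i) (xinv i) (w + z) =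
      signedPow (x i) (xinv i) w * signedPow (x i) (xinv i) z := by
  by_cases hi : i ∈ I
  · exact signedPow_add_of_inverse (h.inverse i hi) w z
  · exact signedPow_add_of_nonneg (hw hi) (hz hi)

theorem tail {I : Set (Fin (M + 1))} {x xinv : Fin (M + 1) → R}
    (h : QuantumSolvableRelations q I x xinv) :
    QuantumSolvableRelations q (Fin.succ ⁻¹' I) (x ∘ Fin.succ) (xinv ∘ Fin.succ) where
  inverse j hj := h.inverse j.succ hj
  qCommuteMod i j hij := by
    rw [generatorsOn_comp, Fin.image_succ_Ioi]
    exact h.qCommuteMod i.succ j.succ (Fin.succ_lt_succ_iff.mpr hij)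
  qCommuteMod_bot i hi j hij := h.qCommuteMod_bot i.succ hi j.succ (Fin.succ_lt_succ_iff.mpr hij)

theorem qCommuteMod_generator (h : QuantumSolvableRelations q I x xinv) (hq : q ≠ 0) {i : Fin M}
    {B : Submodule F R} (hcomm : ∀ j, i < j → QCommuteMod q B (x i) (x j))
    (hB : ∀ a ∈ Algebra.adjoin F (generatorsOn x xinv I (Ioi i)), ∀ y ∈ B, a * y ∈ B ∧ y * a ∈ B)
    {g : R} (hg : g ∈ generatorsOn x xinv I (Ioi i)) : QCommuteMod q B g (x i) := by
  rcases hg with ⟨j, hij, rfl⟩ | ⟨j, ⟨hj, hij⟩, rfl⟩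
  · exact (hcomm j hij).symm hq
  · have xinv_mem : xinv j ∈ Algebra.adjoin F (generatorsOn x xinv I (Ioi i)) :=
      Algebra.subset_adjoin (.inr ⟨j, ⟨hj, hij⟩, rfl⟩)
    exact ((hcomm j hij).symm hq).inv_left hq (h.inverse j hj).1 (h.inverse j hj).2 fun y hy =>
      (hB _ xinv_mem _ ((hB _ xinv_mem y hy).1)).2

theorem qCommuteMod_adjoin (h : QuantumSolvableRelations q I x xinv) (hq : q ≠ 0) {i : Fin M}
    {a : R} (ha : a ∈ Submonoid.closure (generatorsOn x xinv I (Ioi i))) :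
    QCommuteMod q (Algebra.adjoin F (generatorsOn x xinv I (Ioi i))).toSubmodule a (x i) :=
  .of_mem_closure hq
    (fun _ hg => h.qCommuteMod_generator hq (h.qCommuteMod i)
      (fun _ ha _ hy => ⟨Subalgebra.mul_mem _ ha hy, Subalgebra.mul_mem _ hy ha⟩) hg)
    (fun _ ha _ hy => Subalgebra.mul_mem _ ha hy) (fun _ ha _ hy => Subalgebra.mul_mem _ hy ha) ha

theorem qCommuteMod_bot_signedPow (h : QuantumSolvableRelations q I x xinv) (hq : q ≠ 0) {i : Fin M}
    (hi : i ∈ I) {a : R} (ha : a ∈ Submonoid.closure (generatorsOn x xinv I (Ioi i))) (z : ℤ) :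
    QCommuteMod q ⊥ a (signedPow (x i) (xinv i) z) := by
  have comm_x : QCommuteMod q ⊥ (x i) a := .symm hq <| .of_mem_closure hq
    (fun _ hg => h.qCommuteMod_generator hq (h.qCommuteMod_bot i hi) (by simp) hg)
    (by simp) (by simp) ha
  have comm_xinv : QCommuteMod q ⊥ (xinv i) a :=
    comm_x.inv_left hq (h.inverse i hi).1 (h.inverse i hi).2 (by simp)
  refine .symm hq <| .of_mem_closure (G := {x i, xinv i}) hq ?_ (by simp) (by simp)
    (signedPow_mem_closure (by simp) (by simp))
  rintro _ (rfl | rfl)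
  exacts [comm_x, comm_xinv]

theorem exists_mul_eq_add (h : QuantumSolvableRelations q I x xinv) (hq : q ≠ 0) {i : Fin M} {c : R}
    (hc : c ∈ Algebra.adjoin F (generatorsOn x xinv I (Ioi i))) :
    ∃ u ∈ Algebra.adjoin F (generatorsOn x xinv I (Ioi i)),
      ∃ v ∈ Algebra.adjoin F (generatorsOn x xinv I (Ioi i)), c * x i = x i * u + v := by
  induction hc using Algebra.adjoin_induction with
  | mem g hg =>
    obtain ⟨k, hk⟩ := h.qCommuteMod_adjoin hq (Submonoid.subset_closure hg)
    refine ⟨q ^ k • g, Subalgebra.smul_mem _ (Algebra.subset_adjoin hg) _, _, hk, ?_⟩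
    rw [mul_smul_comm, add_sub_cancel]
  | algebraMap r =>
    exact ⟨_, Subalgebra.algebraMap_mem _ r, 0, zero_mem _, by
      rw [add_zero, Algebra.commutes]⟩
  | add c d _ _ ihc ihd =>
    obtain ⟨u, hu, v, hv, hc⟩ := ihc
    obtain ⟨u', hu', v', hv', hd⟩ := ihd
    refine ⟨u + u', add_mem hu hu', v + v', add_mem hv hv', ?_⟩
    rw [add_mul, hc, hd, mul_add, add_add_add_comm]
  | mul c d hcA _ ihc ihd =>
    obtain ⟨u, hu, v, hv, hc⟩ := ihc
    obtain ⟨u', hu', v', hv', hd⟩ := ihd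
    refine ⟨u * u', mul_mem hu hu', v * u' + c * v',
      add_mem (mul_mem hv hu') (mul_mem hcA hv'), ?_⟩
    rw [mul_assoc, hd, mul_add, ← mul_assoc, hc, add_mul, mul_assoc, add_assoc]

theorem mul_mem_powSpanLT (h : QuantumSolvableRelations q I x xinv) (hq : q ≠ 0) {i : Fin M}
    (hi : i ∉ I) {n : ℕ} {y : R} (hy : y ∈ powSpanLT F I x xinv i n) :
    y * x i ∈ powSpanLT F I x xinv i (n + 1 : ℕ) := by
  suffices powSpanLT F I x xinv i n ≤
      (powSpanLT F I x xinv i (n + 1 : ℕ)).comap (LinearMap.mulRight F (x i)) from this hy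
  rw [powSpanLT, span_le]
  rintro _ ⟨w, hw, hw0, c, hc, rfl⟩
  obtain ⟨m, rfl⟩ := Int.eq_ofNat_of_zero_le (hw0 hi)
  obtain ⟨u, hu, v, hv, hcx⟩ := h.exists_mul_eq_add hq hc
  have pow_mul_mem {m' : ℕ} (hm' : m' < n + 1) {d : R}
      (hd : d ∈ Algebra.adjoin F (generatorsOn x xinv I (Ioi i))) :
      x i ^ m' * d ∈ powSpanLT F I x xinv i (n + 1 : ℕ) :=
    subset_span ⟨m', by exact_mod_cast hm', fun _ => by positivity, d, hd, by simp⟩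
  have expand : x i ^ m * c * x i = x i ^ (m + 1) * u + x i ^ m * v := by
    rw [mul_assoc, hcx, mul_add, ← mul_assoc, pow_succ]
  simpa [expand] using add_mem (pow_mul_mem (m' := m + 1) (by omega) hu)
    (pow_mul_mem (m' := m) (by omega) hv)

theorem qCommuteMod_signedPow (h : QuantumSolvableRelations q I x xinv) (hq : q ≠ 0) {i : Fin M}
    {a : R} (ha : a ∈ Submonoid.closure (generatorsOn x xinv I (Ioi i))) {z : ℤ}
    (hz : i ∉ I → 0 ≤ z) :
    QCommuteMod q (powSpanLT F I x xinv i z) a (signedPow (x i) (xinv i) z) := by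
  by_cases hi : i ∈ I
  · exact (h.qCommuteMod_bot_signedPow hq hi ha z).mono bot_le
  · obtain ⟨n, rfl⟩ := Int.eq_ofNat_of_zero_le (hz hi)
    rw [signedPow_natCast]
    refine (h.qCommuteMod_adjoin hq ha).pow_right (D := fun n => powSpanLT F I x xinv i n) hq
      (fun n y hy => h.mul_mem_powSpanLT hq hi hy) (fun n y hy => subset_span ?_) n
    exact ⟨n, by simp, fun _ => by positivity, y, hy, by simp⟩

end QuantumSolvableRelations

end QuantumSolvable

section Induction

variable {F R : Type*} [Field F] [Ring R] [Algebra F R] {q : F} {M : ℕ} {I : Set (Fin (M + 1))}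
  {x xinv : Fin (M + 1) → R}

theorem lexMonomial_cons (x xinv : Fin (M + 1) → R) (z : ℤ) (v : Lex (Fin M → ℤ)) :
    lexMonomial x xinv (toLex (Fin.cons z (ofLex v))) =
      signedPow (x 0) (xinv 0) z * lexMonomial (x ∘ Fin.succ) (xinv ∘ Fin.succ) v :=
  orderedMonomial_cons x xinv z (ofLex v)

theorem signedPow_mul_mem_span {T : Set (Lex (Fin M → ℤ))} {T' : Set (Lex (Fin (M + 1) → ℤ))}
    {z : ℤ} (hT : ∀ u ∈ T, toLex (Fin.cons z (ofLex u)) ∈ T') {c : R}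
    (hc : c ∈ span F (lexMonomial (x ∘ Fin.succ) (xinv ∘ Fin.succ) '' T)) :
    signedPow (x 0) (xinv 0) z * c ∈ span F (lexMonomial x xinv '' T') := by
  suffices span F (lexMonomial (x ∘ Fin.succ) (xinv ∘ Fin.succ) '' T) ≤
      (span F (lexMonomial x xinv '' T')).comap
        (LinearMap.mulLeft F (signedPow (x 0) (xinv 0) z)) from this hc
  rw [span_le]
  rintro _ ⟨u, hu, rfl⟩
  exact subset_span ⟨_, hT u hu, lexMonomial_cons x xinv z u⟩

theorem cons_mem_admissibleExponents {z : ℤ} {v : Lex (Fin M → ℤ)} (hz : 0 ∉ I → 0 ≤ z)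
    (hv : v ∈ admissibleExponents (Fin.succ ⁻¹' I)) :
    toLex (Fin.cons z (ofLex v)) ∈ admissibleExponents I :=
  Fin.cases hz hv

theorem exists_cons_of_mem_admissibleExponents {t : Lex (Fin (M + 1) → ℤ)}
    (ht : t ∈ admissibleExponents I) :
    ∃ z : ℤ, ∃ v ∈ admissibleExponents (Fin.succ ⁻¹' I),
      (0 ∉ I → 0 ≤ z) ∧ toLex (Fin.cons z (ofLex v)) = t :=
  ⟨t 0, toLex (Fin.tail (ofLex t)), fun j => ht j.succ, ht 0, Fin.cons_self_tail (ofLex t)⟩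

theorem toLex_cons_add_cons (z z' : ℤ) (v v' : Lex (Fin M → ℤ)) :
    toLex (Fin.cons z (ofLex v) : Fin (M + 1) → ℤ) + toLex (Fin.cons z' (ofLex v')) =
      toLex (Fin.cons (z + z') (ofLex (v + v'))) :=
  funext <| Fin.cases rfl fun _ => rfl

theorem toLex_cons_lt_of_lt {w z : ℤ} (h : w < z) (u v : Fin M → ℤ) :
    toLex (Fin.cons w u : Fin (M + 1) → ℤ) < toLex (Fin.cons z v) :=
  (Fin.pi_lex_lt_cons_cons _).mpr (.inl h)

theorem toLex_cons_lt_cons (z : ℤ) {u v : Lex (Fin M → ℤ)} (h : u < v) :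
    toLex (Fin.cons z (ofLex u) : Fin (M + 1) → ℤ) < toLex (Fin.cons z (ofLex v)) :=
  (Fin.pi_lex_lt_cons_cons _).mpr (.inr ⟨rfl, h⟩)

namespace QuantumSolvableRelations

theorem signedPow_mul_mul_mem_spanLT (h : QuantumSolvableRelations q I x xinv)
    (hT : IsTwistedFiltered q (lexMonomial (x ∘ Fin.succ) (xinv ∘ Fin.succ))
      (admissibleExponents (Fin.succ ⁻¹' I)))
    {z z' : ℤ} (hz : 0 ∉ I → 0 ≤ z) {y c : R} (hy : y ∈ powSpanLT F I x xinv 0 z')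
    (hc : c ∈ hT.spanSubalgebra) (v : Fin M → ℤ) :
    signedPow (x 0) (xinv 0) z * y * c ∈
      spanLT F (lexMonomial x xinv) (admissibleExponents I) (toLex (Fin.cons (z + z') v)) := by
  suffices powSpanLT F I x xinv 0 z' ≤
      (spanLT F (lexMonomial x xinv) (admissibleExponents I) (toLex (Fin.cons (z + z') v))).comap
        (LinearMap.mulLeftRight F (signedPow (x 0) (xinv 0) z, c)) from this hy
  rw [powSpanLT, span_le]
  rintro _ ⟨w, hw, hw0, a, ha, rfl⟩
  have ha : a ∈ hT.spanSubalgebra := by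
    rw [← generatorsOn_comp_succ] at ha
    exact adjoin_generatorsOn_le subset_span _ ha
  have expand : signedPow (x 0) (xinv 0) z * (signedPow (x 0) (xinv 0) w * a) * c =
      signedPow (x 0) (xinv 0) (z + w) * (a * c) := by
    simp only [h.signedPow_add hz hw0, mul_assoc]
  rw [SetLike.mem_coe, mem_comap, LinearMap.mulLeftRight_apply, expand]
  refine signedPow_mul_mem_span (fun u hu => mem_inter ?_ ?_) (Subalgebra.mul_mem _ ha hc)
  · exact cons_mem_admissibleExponents (fun h0 => add_nonneg (hz h0) (hw0 h0)) hu
  · exact toLex_cons_lt_of_lt (by omega) _ _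

/-- Moving `x 0 ^ z'` to the left across the tail of the first monomial and then multiplying the
two tails only produces errors of lower degree. -/
theorem lexMonomial_cons_mul_cons (h : QuantumSolvableRelations q I x xinv) (hq : q ≠ 0)
    (hT : IsTwistedFiltered q (lexMonomial (x ∘ Fin.succ) (xinv ∘ Fin.succ))
      (admissibleExponents (Fin.succ ⁻¹' I)))
    {z z' : ℤ} (hz : 0 ∉ I → 0 ≤ z) (hz' : 0 ∉ I → 0 ≤ z') {v v' : Lex (Fin M → ℤ)}
    (hv : v ∈ admissibleExponents (Fin.succ ⁻¹' I))
    (hv' : v' ∈ admissibleExponents (Fin.succ ⁻¹' I)) :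
    ∃ k : ℤ, lexMonomial x xinv (toLex (Fin.cons z (ofLex v))) *
        lexMonomial x xinv (toLex (Fin.cons z' (ofLex v'))) -
      q ^ k • lexMonomial x xinv (toLex (Fin.cons (z + z') (ofLex (v + v')))) ∈
        spanLT F (lexMonomial x xinv) (admissibleExponents I)
          (toLex (Fin.cons (z + z') (ofLex (v + v')))) := by
  set pow₀ := signedPow (x 0) (xinv 0)
  set b := lexMonomial (x ∘ Fin.succ) (xinv ∘ Fin.succ)
  have hbv : b v ∈ Submonoid.closure (generatorsOn x xinv I (Ioi 0)) := by
    rw [← generatorsOn_comp_succ]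
    exact orderedMonomial_mem_closure hv fun _ _ => mem_univ _
  obtain ⟨k, hk⟩ := h.qCommuteMod_signedPow hq hbv hz'
  obtain ⟨l, hl⟩ := hT.map_mul v hv v' hv'
  refine ⟨k + l, ?_⟩
  have expand : pow₀ z * b v * (pow₀ z' * b v') - q ^ (k + l) • (pow₀ (z + z') * b (v + v')) =
      pow₀ z * (b v * pow₀ z' - q ^ k • (pow₀ z' * b v)) * b v' +
        q ^ k • (pow₀ (z + z') * (b v * b v' - q ^ l • b (v + v'))) := by
    simp only [pow₀, h.signedPow_add hz hz', zpow_add₀ hq, mul_sub, sub_mul, smul_sub,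
      mul_smul_comm, smul_mul_assoc, smul_smul, mul_assoc]
    abel
  rw [lexMonomial_cons, lexMonomial_cons, lexMonomial_cons, expand]
  refine add_mem (h.signedPow_mul_mul_mem_spanLT hT hz hk (subset_span (mem_image_of_mem b hv')) _)
    (smul_mem _ _ (signedPow_mul_mem_span (fun u hu => mem_inter ?_ ?_) hl))
  · exact cons_mem_admissibleExponents (fun h0 => add_nonneg (hz h0) (hz' h0)) hu.1
  · exact toLex_cons_lt_cons _ hu.2

end QuantumSolvableRelations

end Induction

section MainTheorem

variable {F R : Type*} [Field F] [Ring R] [Algebra F R] {q : F} {M : ℕ} {I : Set (Fin M)}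
  {x xinv : Fin M → R}

theorem QuantumSolvableRelations.isTwistedFiltered (hq : q ≠ 0)
    (h : QuantumSolvableRelations q I x xinv) :
    IsTwistedFiltered q (lexMonomial x xinv) (admissibleExponents I) where
  map_zero := orderedMonomial_zero x xinv
  map_mul m hm n hn := by
    induction M with
    | zero => exact ⟨0, by simp [lexMonomial, orderedMonomial]⟩
    | succ M ih =>
      have hT : IsTwistedFiltered q (lexMonomial (x ∘ Fin.succ) (xinv ∘ Fin.succ))
          (admissibleExponents (Fin.succ ⁻¹' I)) := ⟨orderedMonomial_zero _ _, ih h.tail⟩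
      obtain ⟨z, v, hv, hz, rfl⟩ := exists_cons_of_mem_admissibleExponents hm
      obtain ⟨z', v', hv', hz', rfl⟩ := exists_cons_of_mem_admissibleExponents hn
      rw [toLex_cons_add_cons]
      exact h.lexMonomial_cons_mul_cons hq hT hz hz' hv hv'

theorem QuantumSolvableRelations.of_relations
    (hinv : ∀ j ∈ I, x j * xinv j = 1 ∧ xinv j * x j = 1) {s : Fin M → Fin M → ℤ}
    {r : Fin M → Fin M → R}
    (hrel : ∀ i j : Fin M, i < j → x i * x j = q ^ s i j • (x j * x i) + r i j)
    (hr : ∀ i j : Fin M, i < j → r i j ∈ span F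
      {w : R | ∃ t : Fin M → ℤ, (∀ p, t p ≠ 0 → i < p ∧ p < j) ∧ (∀ p, 0 ≤ t p) ∧
        w = orderedMonomial x xinv t})
    (hrdist : ∀ i j : Fin M, i < j → i ∈ I → r i j = 0) :
    QuantumSolvableRelations q I x xinv where
  inverse := hinv
  qCommuteMod i j hij := by
    refine ⟨s i j, ?_⟩
    rw [hrel i j hij, add_sub_cancel_left]
    refine span_le.mpr ?_ (hr i j hij)
    rintro _ ⟨t, supp, nonneg, rfl⟩
    exact Submonoid.closure_le.mpr Algebra.subset_adjoin
      (orderedMonomial_mem_closure (fun p _ => nonneg p) fun p hp => (supp p hp).1)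
  qCommuteMod_bot i hi j hij :=
    ⟨s i j, by rw [hrel i j hij, hrdist i j hij hi, add_zero, sub_self]; exact zero_mem _⟩

theorem quantum_solvable_FA_is_FAq_general (hq : q ≠ 0)
    (h : QuantumSolvableRelations q I x xinv)
    (hind : LinearIndepOn F (lexMonomial x xinv) (admissibleExponents I))
    (hspan : span F (lexMonomial x xinv '' admissibleExponents I) = ⊤) {x₀ : R}
    (hFA : IsFA F x₀) : IsFAq q x₀ :=
  hFA.isFAq_of_isTwistedFiltered (h.isTwistedFiltered hq) hq hind hspan

end MainTheorem

/-- Proposition 2.13: in a quantum solvable algebra `R` over `C = K(q)` (a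
localization of `K[q,q⁻¹]`) — i.e. `R` is generated by `x₁, …, x_M` (those with
index in the distinguished set `kset` being invertible), the ordered monomials form
a free `C`-basis, `xᵢ xⱼ = q^{s_{ij}} xⱼ xᵢ + r_{ij}` for `i < j` with `r_{ij}` a
`C`-combination of (nonnegative) monomials in `x_{i+1}, …, x_{j-1}` only, pure
`q`-commutation with the distinguished generators, and `(s_{ij})` skew-symmetric —
every FA-element is an FA_q-element: for every `a ∈ R` the polynomial in the
FA-relation may be chosen to split with all roots in `Γ = {q^k : k ∈ ℤ}`. -/
theorem quantum_solvable_FA_is_FAq {K : Type*} [Field K] [CharZero K] [IsAlgClosed K]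
    {R : Type*} [Ring R] [IsDomain R] [Algebra (RatFunc K) R]
    (M : ℕ) (kset : Finset (Fin M))
    (x xinv : Fin M → R)
    (hinv : ∀ j ∈ kset, x j * xinv j = 1 ∧ xinv j * x j = 1)
    (s : Fin M → Fin M → ℤ) (hskew : ∀ i j, s i j = - s j i)
    (hbasisInd : LinearIndependent (RatFunc K)
      fun t : {t : Fin M → ℤ // ∀ j ∉ kset, 0 ≤ t j} => orderedMonomial x xinv t.1)
    (hbasisSpan : Submodule.span (RatFunc K)
      (Set.range fun t : {t : Fin M → ℤ // ∀ j ∉ kset, 0 ≤ t j} =>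
        orderedMonomial x xinv t.1) = ⊤)
    (r : Fin M → Fin M → R)
    (hrel : ∀ i j : Fin M, i < j →
      x i * x j = ((RatFunc.X : RatFunc K) ^ (s i j)) • (x j * x i) + r i j)
    (hr : ∀ i j : Fin M, i < j → r i j ∈ Submodule.span (RatFunc K)
      {w : R | ∃ t : Fin M → ℤ, (∀ p, t p ≠ 0 → i < p ∧ p < j) ∧ (∀ p, 0 ≤ t p) ∧
        w = orderedMonomial x xinv t})
    (hrdist : ∀ i j : Fin M, i < j → (i ∈ kset ∨ j ∈ kset) → r i j = 0)
    (x₀ : R) (hFA : IsFA (RatFunc K) x₀) :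
    ∀ a : R, ∃ (N : ℕ) (e : Fin N → ℤ) (c₀ : RatFunc K), c₀ ≠ 0 ∧
      ∑ i ∈ Finset.range (N + 1),
        (c₀ • ∏ w : Fin N,
          (Polynomial.X - Polynomial.C ((RatFunc.X : RatFunc K) ^ (e w)))).coeff i •
            (x₀ ^ i * a * x₀ ^ (N - i)) = 0 := by
  have h : QuantumSolvableRelations (RatFunc.X : RatFunc K) kset x xinv :=
    .of_relations hinv hrel hr fun i j hij hi => hrdist i j hij (.inl hi)
  exact (quantum_solvable_FA_is_FAq_general RatFunc.X_ne_zero h hbasisInd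
    (by rwa [Set.image_eq_range]) hFA).2
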